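/- For every x in the Thue–Morse subshift X_TM there exists a unique r ∈ {0, 1, 2, 3} such that for every k ∈ ℤ, the 4-tuple (x_{4k+r}, x_{4k+r+1}, x_{4k+r+2}, x_{4k+r+3}) is equal to (0,1,1,0) or to (1,0,0,1); that is, every x ∈ X_TM decomposes uniquely into consecutive blocks of the form 0110 and 1001. -/

import Mathlib

/-- The Thue–Morse sequence: the number of 1 digits in the binary expansion, mod 2. -/
def thueMorse (n : ℕ) : ℕ := (Nat.digits 2 n).sum % 2

/-- Membership in the Thue–Morse subshift: every finite subword of `x`
occurs as a subword of the Thue–Morse sequence. -/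
def MemTMSubshift (x : ℤ → ℕ) : Prop :=
  ∀ (m : ℤ) (k : ℕ), ∃ M : ℕ, ∀ j ≤ k, x (m + j) = thueMorse (M + j)

theorem thueMorse_lt_two (n : ℕ) : thueMorse n < 2 := Nat.mod_lt _ two_pos

theorem thueMorse_two_mul (n : ℕ) : thueMorse (2 * n) = thueMorse n := by
  rcases Nat.eq_zero_or_pos n with rfl | hn
  · simp
  · simp [thueMorse, Nat.digits_def' (b := 2) one_lt_two (show 0 < 2 * n by omega)]

theorem thueMorse_two_mul_add_one (n : ℕ) : thueMorse (2 * n + 1) = 1 - thueMorse n := by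
  have h : (2 * n + 1) / 2 = n := by omega
  simp only [thueMorse, Nat.digits_def' (b := 2) one_lt_two (show 0 < 2 * n + 1 by omega), h,
    List.sum_cons]
  omega

/-- The word of length four at position `i` of `x` is `0110` or `1001`. -/
def IsTMBlockAt (x : ℤ → ℕ) (i : ℤ) : Prop :=
  (x i, x (i + 1), x (i + 2), x (i + 3)) = (0, 1, 1, 0) ∨
    (x i, x (i + 1), x (i + 2), x (i + 3)) = (1, 0, 0, 1)

theorem thueMorse_four_mul (n : ℕ) : thueMorse (4 * n) = thueMorse n := by
  rw [show 4 * n = 2 * (2 * n) by ring, thueMorse_two_mul, thueMorse_two_mul]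

theorem thueMorse_aligned_block (n : ℕ) :
    (thueMorse (4 * n), thueMorse (4 * n + 1), thueMorse (4 * n + 2), thueMorse (4 * n + 3))
        = (0, 1, 1, 0) ∨
      (thueMorse (4 * n), thueMorse (4 * n + 1), thueMorse (4 * n + 2), thueMorse (4 * n + 3))
        = (1, 0, 0, 1) := by
  have h1 : thueMorse (4 * n + 1) = 1 - thueMorse n := by
    rw [show 4 * n + 1 = 2 * (2 * n) + 1 by ring, thueMorse_two_mul_add_one, thueMorse_two_mul]
  have h2 : thueMorse (4 * n + 2) = 1 - thueMorse n := by
    rw [show 4 * n + 2 = 2 * (2 * n + 1) by ring, thueMorse_two_mul, thueMorse_two_mul_add_one]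
  have h3 : thueMorse (4 * n + 3) = 1 - (1 - thueMorse n) := by
    rw [show 4 * n + 3 = 2 * (2 * n + 1) + 1 by ring, thueMorse_two_mul_add_one,
      thueMorse_two_mul_add_one]
  have h := thueMorse_lt_two n
  simp only [thueMorse_four_mul, h1, h2, h3, Prod.mk.injEq]
  omega

theorem thueMorse_not_three_equal (n : ℕ) :
    ¬(thueMorse n = thueMorse (n + 1) ∧ thueMorse (n + 1) = thueMorse (n + 2)) := by
  have key (a : ℕ) : thueMorse (2 * a) ≠ thueMorse (2 * a + 1) := by
    rw [thueMorse_two_mul, thueMorse_two_mul_add_one]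
    have := thueMorse_lt_two a
    omega
  rintro ⟨h, h'⟩
  rcases Nat.even_or_odd' n with ⟨a, rfl | rfl⟩
  · exact key a h
  · exact key (a + 1) h'

namespace MemTMSubshift

variable {x : ℤ → ℕ}

theorem exists_block_offset (hx : MemTMSubshift x) :
    ∃ r : ℤ, 0 ≤ r ∧ r < 4 ∧ ∀ k : ℤ, IsTMBlockAt x (4 * k + r) := by
  by_contra! hbad
  choose! f hf using hbad
  obtain ⟨a, ha⟩ : ∃ a : ℤ, ∀ r : ℤ, 0 ≤ r → r < 4 → a ≤ f r := by
    obtain ⟨a, ha⟩ := ((Finset.Ico (0 : ℤ) 4).image f).bddBelow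
    exact ⟨a, fun r h0 h4 => ha (by simpa using ⟨r, ⟨h0, h4⟩, rfl⟩)⟩
  obtain ⟨b, hb⟩ : ∃ b : ℤ, ∀ r : ℤ, 0 ≤ r → r < 4 → f r ≤ b := by
    obtain ⟨b, hb⟩ := ((Finset.Ico (0 : ℤ) 4).image f).bddAbove
    exact ⟨b, fun r h0 h4 => hb (by simpa using ⟨r, ⟨h0, h4⟩, rfl⟩)⟩
  obtain ⟨M, hM⟩ := hx (4 * a) (4 * (b - a) + 8).toNat
  obtain ⟨r, h0, h4, q, hq⟩ : ∃ r : ℤ, 0 ≤ r ∧ r < 4 ∧ ∃ q : ℤ, M + r = 4 * q :=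
    ⟨(-M : ℤ) % 4, by omega, by omega, (M + (-M : ℤ) % 4) / 4, by omega⟩
  have har := ha r h0 h4
  have hbr := hb r h0 h4
  obtain ⟨n, hn⟩ : ∃ n : ℕ, (n : ℤ) = q + (f r - a) := ⟨(q + (f r - a)).toNat, by omega⟩
  have hval (i : ℕ) (hi : i < 4) : x (4 * f r + r + i) = thueMorse (4 * n + i) := by
    have := hM (4 * (f r - a) + r + i).toNat (by omega)
    convert this using 2 <;> omega
  apply hf r h0 h4
  have v0 := hval 0 (by norm_num)
  have v1 := hval 1 (by norm_num)
  have v2 := hval 2 (by norm_num)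
  have v3 := hval 3 (by norm_num)
  push_cast at v0 v1 v2 v3
  rw [add_zero, add_zero] at v0
  rw [IsTMBlockAt, v0, v1, v2, v3]
  exact thueMorse_aligned_block n

theorem not_periodic_four (hx : MemTMSubshift x) : ¬∀ j : ℤ, x (j + 4) = x j := by
  intro hper
  obtain ⟨M, hM⟩ := hx 0 12
  obtain ⟨q, i, hi, hq⟩ : ∃ q i : ℕ, i < 4 ∧ M + i = 4 * q :=
    ⟨(M + 3) / 4, 4 * ((M + 3) / 4) - M, by omega, by omega⟩
  have hval (c : ℕ) (hc : c ≤ 2) : x (i + 4 * c) = thueMorse (q + c) := by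
    rw [← thueMorse_four_mul (q + c)]
    have := hM (i + 4 * c) (by omega)
    convert this using 2
    · push_cast
      ring
    · omega
  have v0 := hval 0 (by norm_num)
  have v1 := hval 1 (by norm_num)
  have v2 := hval 2 (by norm_num)
  have p0 := hper i
  have p1 := hper (i + 4)
  norm_num at v0 v1 v2
  rw [add_assoc] at p1
  norm_num at p1
  exact thueMorse_not_three_equal q ⟨by omega, by omega⟩

theorem block_offset_not_lt (hx : MemTMSubshift x) {r s : ℤ} (hr : 0 ≤ r) (hs : s < 4)
    (hxr : ∀ k : ℤ, IsTMBlockAt x (4 * k + r)) (hxs : ∀ k : ℤ, IsTMBlockAt x (4 * k + s)) :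
    ¬r < s := by
  intro hlt
  simp only [IsTMBlockAt, Prod.mk.injEq] at hxr hxs
  obtain rfl | rfl | rfl : s = r + 1 ∨ s = r + 2 ∨ s = r + 3 := by omega
  · have h := hxr 0
    have h' := hxs 0
    ring_nf at h h'
    omega
  · refine hx.not_periodic_four fun j => ?_
    obtain ⟨k, i, h0, h4, rfl⟩ : ∃ k i : ℤ, 0 ≤ i ∧ i < 4 ∧ j = 4 * k + r + i :=
      ⟨(j - r) / 4, (j - r) % 4, by omega, by omega, by omega⟩
    have h := hxr k
    have h' := hxr (k + 1)
    have h'' := hxs k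
    interval_cases i <;> ring_nf at h h' h'' ⊢ <;> omega
  · have h := hxr 0
    have h' := hxs (-1)
    ring_nf at h h'
    omega

end MemTMSubshift

/-- Every element of the Thue–Morse subshift decomposes uniquely into consecutive
blocks of the form `0110` and `1001`: there is a unique offset `r ∈ {0,1,2,3}` such
that each aligned 4-block `(x_{4k+r}, x_{4k+r+1}, x_{4k+r+2}, x_{4k+r+3})` equals
`(0,1,1,0)` or `(1,0,0,1)`. -/
theorem tm_unique_block_decomposition (x : ℤ → ℕ) (hx : MemTMSubshift x) :
    ∃! r : ℤ, 0 ≤ r ∧ r < 4 ∧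
      ∀ k : ℤ,
        (x (4 * k + r), x (4 * k + r + 1), x (4 * k + r + 2), x (4 * k + r + 3))
            = (0, 1, 1, 0) ∨
        (x (4 * k + r), x (4 * k + r + 1), x (4 * k + r + 2), x (4 * k + r + 3))
            = (1, 0, 0, 1) := by
  obtain ⟨r, h0, h4, hr⟩ := hx.exists_block_offset
  refine ⟨r, ⟨h0, h4, hr⟩, ?_⟩
  rintro s ⟨hs0, hs4, hs⟩
  exact le_antisymm (not_lt.mp (hx.block_offset_not_lt h0 hs4 hr hs))
    (not_lt.mp (hx.block_offset_not_lt hs0 h4 hs hr))
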